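/- The second derivative of the special lagrangian angle satisfies D²Θ(A)(B,B) = −2 Tr((Id + A²)⁻¹ A B (Id + A²)⁻¹ B) for symmetric matrices A, B; consequently Θ is strictly concave on the open cone of positive definite symmetric matrices. -/

import Mathlib

/-- The special lagrangian angle of a real symmetric matrix: the sum of the arctangents of its
eigenvalues. -/
noncomputable def slAngle {d : ℕ} (A : Matrix (Fin d) (Fin d) ℝ) : ℝ :=
  if h : A.IsHermitian then ∑ i, Real.arctan (h.eigenvalues i) else 0

/-! For Hermitian `A`, `B` with eigenvalues `aᵢ`, `bⱼ` and orthonormal eigenvectors `uᵢ`, `vⱼ`,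
`Tr (f(A) g(B)) = ∑ᵢⱼ |⟨uᵢ, vⱼ⟩|² f(aᵢ) g(bⱼ)`. Hence the first-order remainder
`Tr f(A) - Tr f(B) - Tr (f'(B) (A - B))` is the same nonnegative combination of the scalar
remainders `f(aᵢ) - f(bⱼ) - f'(bⱼ) (aᵢ - bⱼ)`. A quadratic bound on these shows that `Tr f` has
derivative `B ↦ Tr (f'(A) B)` at `A` without differentiating eigenvalues, and their sign shows that
`Tr f` is strictly concave wherever `f` is (Klein's inequality). Since `Θ = Tr arctan`, its first
derivative is `B ↦ Tr ((1 + A²)⁻¹ B)`, and the second comes from differentiating the inverse;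
`arctan` is strictly concave on `[0, ∞)`. -/

open Matrix RCLike
open scoped Ring

section ScalarInequalities

variable {f f' : ℝ → ℝ}

theorem lt_tangent_of_strictConcaveOn {s : Set ℝ} (hf : StrictConcaveOn ℝ s f) {x y m : ℝ}
    (hy : HasDerivWithinAt f m s y) (hxs : x ∈ s) (hys : y ∈ s) (hxy : x ≠ y) :
    f x < f y + m * (x - y) := by
  rcases hxy.lt_or_gt with h | h
  · have := hf.lt_slope_of_hasDerivWithinAt hxs hys h hy
    rw [slope_def_field, lt_div_iff₀ (sub_pos.2 h)] at this
    linarith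
  · have := hf.slope_lt_of_hasDerivWithinAt hys hxs h hy
    rw [slope_def_field, div_lt_iff₀ (sub_pos.2 h)] at this
    linarith

theorem abs_sub_tangent_le_of_lipschitzWith {K : NNReal} (hf : ∀ x, HasDerivAt f (f' x) x)
    (hf' : LipschitzWith K f') (x y : ℝ) :
    |f x - f y - f' y * (x - y)| ≤ K * (x - y) ^ 2 := by
  have hderiv : ∀ z ∈ Set.uIcc y x, HasDerivWithinAt (fun z => f z - f' y * z) (f' z - f' y)
      (Set.uIcc y x) z := fun z _ => by
    simpa only [mul_one] using
      ((hf z).fun_sub ((hasDerivAt_id' z).const_mul (f' y))).hasDerivWithinAt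
  have hbound : ∀ z ∈ Set.uIcc y x, ‖f' z - f' y‖ ≤ K * |x - y| := fun z hz =>
    (hf'.norm_sub_le z y).trans <|
      mul_le_mul_of_nonneg_left (Set.abs_sub_left_of_mem_uIcc hz) K.2
  calc |f x - f y - f' y * (x - y)| = ‖f x - f' y * x - (f y - f' y * y)‖ := by
        rw [Real.norm_eq_abs]; congr 1; ring
    _ ≤ K * |x - y| * ‖x - y‖ :=
        (convex_uIcc y x).norm_image_sub_le_of_norm_hasDerivWithin_le hderiv hbound
          Set.left_mem_uIcc Set.right_mem_uIcc
    _ = K * (x - y) ^ 2 := by rw [Real.norm_eq_abs, mul_assoc, abs_mul_abs_self, sq]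

theorem strictConcaveOn_arctan_Ici : StrictConcaveOn ℝ (Set.Ici 0) Real.arctan := by
  refine StrictAntiOn.strictConcaveOn_of_deriv (convex_Ici 0) Real.continuous_arctan.continuousOn ?_
  rw [interior_Ici, Real.deriv_arctan]
  intro x hx y _ hxy
  have hx : 0 < x := hx
  beta_reduce
  gcongr

theorem lipschitzWith_inv_one_add_sq : LipschitzWith 1 fun x : ℝ => (1 + x ^ 2)⁻¹ := by
  refine LipschitzWith.of_dist_le_mul fun x y => ?_
  have hfactor : (1 + x ^ 2)⁻¹ - (1 + y ^ 2)⁻¹ =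
      (y + x) / ((1 + x ^ 2) * (1 + y ^ 2)) * (y - x) := by
    field_simp
    ring
  have hle : |y + x| ≤ (1 + x ^ 2) * (1 + y ^ 2) := by
    rw [abs_le]
    constructor <;>
      nlinarith [sq_nonneg (x + 1), sq_nonneg (x - 1), sq_nonneg (y + 1), sq_nonneg (y - 1),
        sq_nonneg (x * y)]
  rw [NNReal.coe_one, Real.dist_eq, hfactor, abs_mul, abs_div, ← Real.dist_eq, dist_comm y x,
    abs_of_pos (show 0 < (1 + x ^ 2) * (1 + y ^ 2) by positivity)]
  exact mul_le_mul_of_nonneg_right ((div_le_one (by positivity)).2 hle) dist_nonneg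

end ScalarInequalities

theorem strictConcaveOn_of_exists_lt_tangent {E : Type*} [AddCommGroup E] [Module ℝ E] {S : Set E}
    (hS : Convex ℝ S) {F : E → ℝ}
    (hF : ∀ y ∈ S, ∃ L : E →ₗ[ℝ] ℝ, ∀ x ∈ S, x ≠ y → F x < F y + L (x - y)) :
    StrictConcaveOn ℝ S F := by
  refine ⟨hS, fun x hx y hy hxy a b ha hb hab => ?_⟩
  obtain ⟨L, hL⟩ := hF (a • x + b • y) (hS hx hy ha.le hb.le hab)
  obtain rfl : b = 1 - a := by linarith
  have ex : x - (a • x + (1 - a) • y) = (1 - a) • (x - y) := by module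
  have ey : y - (a • x + (1 - a) • y) = -a • (x - y) := by module
  have hx' := hL x hx <| sub_ne_zero.1 <| ex ▸ smul_ne_zero hb.ne' (sub_ne_zero.2 hxy)
  have hy' := hL y hy <| sub_ne_zero.1 <|
    ey ▸ smul_ne_zero (neg_ne_zero.2 ha.ne') (sub_ne_zero.2 hxy)
  rw [ex, map_smul, smul_eq_mul] at hx'
  rw [ey, map_smul, smul_eq_mul] at hy'
  rw [smul_eq_mul, smul_eq_mul]
  linarith [mul_lt_mul_of_pos_left hx' ha, mul_lt_mul_of_pos_left hy' hb]

theorem convex_isSymm_posDef {n : Type*} :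
    Convex ℝ {A : Matrix n n ℝ | A.IsSymm ∧ A.PosDef} :=
  convex_iff_forall_pos.2 fun _ hA _ hB s t hs ht _ =>
    ⟨(hA.1.smul s).add (hB.1.smul t), (hA.2.smul hs).add (hB.2.smul ht)⟩

theorem isHermitian_add_real_smul {n 𝕜 : Type*} [RCLike 𝕜] {A B : Matrix n n 𝕜}
    (hA : A.IsHermitian) (hB : B.IsHermitian) (t : ℝ) : (A + t • B).IsHermitian :=
  hA.add (hB.smul (IsSelfAdjoint.all t))

section SpectralTrace

variable {n 𝕜 : Type*} [Fintype n] [DecidableEq n] [RCLike 𝕜] {A B : Matrix n n 𝕜} {f f' : ℝ → ℝ}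

/-- The overlap `|⟨uᵢ, vⱼ⟩|²` of the `i`-th eigenvector of `A` with the `j`-th eigenvector of `B`,
the weight of the eigenvalue pair `(aᵢ, bⱼ)` in the trace of `f(A) g(B)`; the inner product is read
off as an entry of `U* V`, where `U` and `V` are the unitaries of eigenvectors. -/
noncomputable def eigenOverlap (hA : A.IsHermitian) (hB : B.IsHermitian) (i j : n) : ℝ :=
  ‖(star (hA.eigenvectorUnitary : Matrix n n 𝕜) * hB.eigenvectorUnitary) i j‖ ^ 2

theorem eigenOverlap_nonneg (hA : A.IsHermitian) (hB : B.IsHermitian) (i j : n) :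
    0 ≤ eigenOverlap hA hB i j :=
  sq_nonneg _

theorem cfc_eq_conj_diagonal (hA : A.IsHermitian) (f : ℝ → ℝ) :
    cfc f A = (hA.eigenvectorUnitary : Matrix n n 𝕜) *
      diagonal (fun i => (f (hA.eigenvalues i) : 𝕜)) *
        star (hA.eigenvectorUnitary : Matrix n n 𝕜) := by
  rw [hA.cfc_eq, IsHermitian.cfc, Unitary.conjStarAlgAut_apply]
  rfl

theorem trace_cfc (hA : A.IsHermitian) (f : ℝ → ℝ) :
    trace (cfc f A) = ((∑ i, f (hA.eigenvalues i) : ℝ) : 𝕜) := by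
  rw [cfc_eq_conj_diagonal hA, trace_mul_cycle, Unitary.coe_star_mul_self, Matrix.one_mul,
    trace_diagonal, ofReal_sum]

theorem trace_diagonal_mul_diagonal_mul_star (p q : n → ℝ) (W : Matrix n n 𝕜) :
    trace (diagonal (fun i => (p i : 𝕜)) * W * diagonal (fun j => (q j : 𝕜)) * star W) =
      ((∑ i, ∑ j, ‖W i j‖ ^ 2 * (p i * q j) : ℝ) : 𝕜) := by
  simp only [trace, diag_apply, Matrix.mul_apply (N := star W), mul_diagonal, diagonal_mul,
    star_apply, RCLike.star_def, ofReal_sum, ofReal_mul, ofReal_pow, ← RCLike.mul_conj]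
  exact Finset.sum_congr rfl fun i _ => Finset.sum_congr rfl fun j _ => by ring

theorem trace_cfc_mul_cfc (hA : A.IsHermitian) (hB : B.IsHermitian) (f g : ℝ → ℝ) :
    trace (cfc f A * cfc g B) = ((∑ i, ∑ j,
      eigenOverlap hA hB i j * (f (hA.eigenvalues i) * g (hB.eigenvalues j)) : ℝ) : 𝕜) := by
  set U := (hA.eigenvectorUnitary : Matrix n n 𝕜)
  set V := (hB.eigenvectorUnitary : Matrix n n 𝕜)
  set D := diagonal fun i => (f (hA.eigenvalues i) : 𝕜)
  set E := diagonal fun j => (g (hB.eigenvalues j) : 𝕜)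
  calc trace (cfc f A * cfc g B) = trace (U * D * star U * (V * E * star V)) := by
        rw [cfc_eq_conj_diagonal hA, cfc_eq_conj_diagonal hB]
    _ = trace (D * (star U * V) * E * star (star U * V)) := by
        rw [star_mul, star_star, ← Matrix.mul_assoc _ (star V) U, trace_mul_comm _ U]
        simp only [Matrix.mul_assoc]
    _ = _ := trace_diagonal_mul_diagonal_mul_star (fun i => f (hA.eigenvalues i))
        (fun j => g (hB.eigenvalues j)) (star U * V)

theorem trace_cfc_sub_tangent (hA : A.IsHermitian) (hB : B.IsHermitian) (f f' : ℝ → ℝ) :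
    trace (cfc f A) - trace (cfc f B) - trace (cfc f' B * (A - B)) =
      ((∑ i, ∑ j, eigenOverlap hA hB i j *
        (f (hA.eigenvalues i) - f (hB.eigenvalues j) -
          f' (hB.eigenvalues j) * (hA.eigenvalues i - hB.eigenvalues j)) : ℝ) : 𝕜) := by
  have hA' : IsSelfAdjoint A := hA
  have hB' : IsSelfAdjoint B := hB
  have hcont : ∀ g : ℝ → ℝ, ContinuousOn g (spectrum ℝ B) := B.finite_real_spectrum.continuousOn
  have hfA := trace_cfc_mul_cfc hA hB f fun _ => 1
  have hfB := trace_cfc_mul_cfc hA hB (fun _ => 1) f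
  have hf'A := trace_cfc_mul_cfc hA hB (fun x => x) f'
  have hf'B := trace_cfc_mul_cfc hA hB (fun _ => 1) fun x => f' x * x
  rw [cfc_const_one ℝ B, mul_one] at hfA
  rw [cfc_const_one ℝ A, one_mul] at hfB
  rw [cfc_id' ℝ A, trace_mul_comm A] at hf'A
  rw [cfc_const_one ℝ A, one_mul, cfc_mul f' _ B (hcont f') (hcont _), cfc_id' ℝ B] at hf'B
  rw [mul_sub, trace_sub, hfA, hfB, hf'A, hf'B]
  simp only [← ofReal_sub, ← Finset.sum_sub_distrib]
  congr 1
  exact Finset.sum_congr rfl fun i _ => Finset.sum_congr rfl fun j _ => by ring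

theorem trace_sub_mul_sub (hA : A.IsHermitian) (hB : B.IsHermitian) :
    trace ((A - B) * (A - B)) = ((∑ i, ∑ j,
      eigenOverlap hA hB i j * (hA.eigenvalues i - hB.eigenvalues j) ^ 2 : ℝ) : 𝕜) := by
  have hA' : IsSelfAdjoint A := hA
  have hB' : IsSelfAdjoint B := hB
  have hsq := trace_cfc_sub_tangent hA hB (fun x => x ^ 2) fun x => 2 * x
  rw [cfc_pow_id (R := ℝ) A 2, cfc_pow_id (R := ℝ) B 2, cfc_const_mul_id (R := ℝ) 2 B] at hsq
  calc trace ((A - B) * (A - B))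
      = trace (A ^ 2) - trace (B ^ 2) - trace (((2 : ℝ) • B) * (A - B)) := by
        simp only [sq, sub_mul, mul_sub, two_smul, add_mul, trace_sub, trace_add,
          trace_mul_comm A B]
        ring
    _ = _ := by
        rw [hsq]
        congr 1
        exact Finset.sum_congr rfl fun i _ => Finset.sum_congr rfl fun j _ => by ring

theorem abs_re_trace_cfc_sub_tangent_le {K : NNReal} (hf : ∀ x, HasDerivAt f (f' x) x)
    (hf' : LipschitzWith K f') (hA : A.IsHermitian) (hB : B.IsHermitian) :
    |re (trace (cfc f A)) - re (trace (cfc f B)) - re (trace (cfc f' B * (A - B)))| ≤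
      K * re (trace ((A - B) * (A - B))) := by
  rw [← map_sub, ← map_sub, trace_cfc_sub_tangent hA hB, trace_sub_mul_sub hA hB, ofReal_re,
    ofReal_re]
  simp only [← Fintype.sum_prod_type', Finset.mul_sum]
  refine (Finset.abs_sum_le_sum_abs _ _).trans (Finset.sum_le_sum fun p _ => ?_)
  rw [abs_mul, abs_of_nonneg (eigenOverlap_nonneg hA hB _ _), mul_left_comm]
  exact mul_le_mul_of_nonneg_left (abs_sub_tangent_le_of_lipschitzWith hf hf' _ _)
    (eigenOverlap_nonneg hA hB _ _)

open scoped ComplexOrder in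
theorem exists_eigenOverlap_pos_of_ne (hA : A.IsHermitian) (hB : B.IsHermitian) (hAB : A ≠ B) :
    ∃ i j, 0 < eigenOverlap hA hB i j ∧ hA.eigenvalues i ≠ hB.eigenvalues j := by
  by_contra! h
  have hzero : ∀ i j, eigenOverlap hA hB i j * (hA.eigenvalues i - hB.eigenvalues j) ^ 2 = 0 := by
    intro i j
    rcases (eigenOverlap_nonneg hA hB i j).eq_or_lt with h0 | hpos
    · rw [← h0, zero_mul]
    · rw [h i j hpos, sub_self, zero_pow two_ne_zero, mul_zero]
  have htrace : trace ((A - B)ᴴ * (A - B)) = 0 := by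
    rw [(hA.sub hB).eq, trace_sub_mul_sub hA hB]
    simp only [hzero, Finset.sum_const_zero, ofReal_zero]
  exact hAB (sub_eq_zero.1 (trace_conjTranspose_mul_self_eq_zero_iff.1 htrace))

theorem re_trace_cfc_lt_tangent {s : Set ℝ} (hf : StrictConcaveOn ℝ s f)
    (hf' : ∀ x ∈ s, HasDerivWithinAt f (f' x) s x) (hA : A.IsHermitian) (hB : B.IsHermitian)
    (hAs : spectrum ℝ A ⊆ s) (hBs : spectrum ℝ B ⊆ s) (hAB : A ≠ B) :
    re (trace (cfc f A)) < re (trace (cfc f B)) + re (trace (cfc f' B * (A - B))) := by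
  have has : ∀ i, hA.eigenvalues i ∈ s := fun i => hAs (hA.eigenvalues_mem_spectrum_real i)
  have hbs : ∀ j, hB.eigenvalues j ∈ s := fun j => hBs (hB.eigenvalues_mem_spectrum_real j)
  have hlt : ∀ i j, hA.eigenvalues i ≠ hB.eigenvalues j →
      f (hA.eigenvalues i) - f (hB.eigenvalues j) -
        f' (hB.eigenvalues j) * (hA.eigenvalues i - hB.eigenvalues j) < 0 := fun i j hne => by
    linarith [lt_tangent_of_strictConcaveOn hf (hf' _ (hbs j)) (has i) (hbs j) hne]
  rw [← sub_neg, ← sub_sub, ← map_sub, ← map_sub, trace_cfc_sub_tangent hA hB, ofReal_re,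
    ← Fintype.sum_prod_type']
  obtain ⟨i, j, hpos, hne⟩ := exists_eigenOverlap_pos_of_ne hA hB hAB
  refine Finset.sum_neg' (fun p _ => ?_)
    ⟨(i, j), Finset.mem_univ _, mul_neg_of_pos_of_neg hpos (hlt i j hne)⟩
  refine mul_nonpos_of_nonneg_of_nonpos (eigenOverlap_nonneg hA hB _ _) ?_
  rcases eq_or_ne (hA.eigenvalues p.1) (hB.eigenvalues p.2) with heq | hne
  · simp [heq]
  · exact (hlt _ _ hne).le

theorem strictConcaveOn_re_trace_cfc {s : Set ℝ} (hf : StrictConcaveOn ℝ s f)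
    (hf' : ∀ x ∈ s, HasDerivWithinAt f (f' x) s x) {S : Set (Matrix n n 𝕜)} (hS : Convex ℝ S)
    (hS_herm : ∀ A ∈ S, A.IsHermitian) (hS_spec : ∀ A ∈ S, spectrum ℝ A ⊆ s) :
    StrictConcaveOn ℝ S fun A => re (trace (cfc f A)) := by
  refine strictConcaveOn_of_exists_lt_tangent hS fun B hB =>
    ⟨reLm ∘ₗ (traceLinearMap n ℝ 𝕜) ∘ₗ LinearMap.mulLeft ℝ (cfc f' B), fun A hA hAB => ?_⟩
  exact re_trace_cfc_lt_tangent hf hf' (hS_herm A hA) (hS_herm B hB) (hS_spec A hA) (hS_spec B hB)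
    hAB

theorem hasDerivAt_re_trace_cfc_add_smul {K : NNReal} (hf : ∀ x, HasDerivAt f (f' x) x)
    (hf' : LipschitzWith K f') (hA : A.IsHermitian) (hB : B.IsHermitian) (t : ℝ) :
    HasDerivAt (fun s : ℝ => re (trace (cfc f (A + s • B))))
      (re (trace (cfc f' (A + t • B) * B))) t := by
  have hbound : ∀ s : ℝ,
      ‖re (trace (cfc f (A + s • B))) - re (trace (cfc f (A + t • B))) -
        (s - t) • re (trace (cfc f' (A + t • B) * B))‖ ≤
      K * re (trace (B * B)) * ‖(s - t) ^ 2‖ := fun s => by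
    have h := abs_re_trace_cfc_sub_tangent_le hf hf' (isHermitian_add_real_smul hA hB s)
      (isHermitian_add_real_smul hA hB t)
    rw [show A + s • B - (A + t • B) = (s - t) • B by module] at h
    simp only [mul_smul_comm, smul_mul_assoc, trace_smul, smul_re] at h
    rw [smul_eq_mul, Real.norm_eq_abs, Real.norm_eq_abs, abs_of_nonneg (sq_nonneg (s - t))]
    linarith
  rw [hasDerivAt_iff_isLittleO]
  refine (Asymptotics.IsBigO.of_bound _ (.of_forall hbound)).trans_isLittleO ?_
  simpa only [Real.norm_eq_abs, sq_abs] using Asymptotics.isLittleO_pow_sub_sub t one_lt_two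

end SpectralTrace

section Resolvent

theorem hasDerivAt_ringInverse_one_add_mul_self {𝕜 R : Type*} [NontriviallyNormedField 𝕜]
    [NormedRing R] [HasSummableGeomSeries R] [NormedAlgebra 𝕜 R] {a : R} (b : R)
    (ha : IsUnit (1 + a * a)) :
    HasDerivAt (fun t : 𝕜 => (1 + (a + t • b) * (a + t • b))⁻¹ʳ)
      (-((1 + a * a)⁻¹ʳ * (a * b + b * a) * (1 + a * a)⁻¹ʳ)) 0 := by
  have hline : HasDerivAt (fun t : 𝕜 => a + t • b) b 0 := by
    simpa only [one_smul] using ((hasDerivAt_id' (0 : 𝕜)).smul_const b).const_add a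
  have hsq : HasDerivAt (fun t : 𝕜 => 1 + (a + t • b) * (a + t • b)) (a * b + b * a) 0 := by
    simpa only [zero_smul, add_zero, add_comm (b * a)] using (hline.fun_mul hline).const_add 1
  obtain ⟨u, hu⟩ := ha
  have hinv := hasFDerivAt_ringInverse (𝕜 := 𝕜) u
  rw [← Ring.inverse_unit, hu] at hinv
  exact hinv.comp_hasDerivAt_of_eq 0 hsq (by simp only [zero_smul, add_zero])

theorem trace_mul_anticommutator_mul {n R : Type*} [Fintype n] [CommSemiring R]
    {A P : Matrix n n R} (hPA : Commute P A) (B : Matrix n n R) :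
    trace (P * (A * B + B * A) * P * B) = 2 * trace (P * A * B * P * B) := by
  have hcycle : trace (P * (B * A) * P * B) = trace (P * A * B * P * B) := by
    calc trace (P * (B * A) * P * B) = trace (P * B * (A * P * B)) := by
          simp only [Matrix.mul_assoc]
      _ = trace (P * A * B * (P * B)) := by rw [← hPA.eq, trace_mul_comm]
      _ = trace (P * A * B * P * B) := by rw [← Matrix.mul_assoc]
  rw [mul_add, add_mul, add_mul, trace_add, hcycle, ← Matrix.mul_assoc P A B, two_mul]

variable {n 𝕜 : Type*} [Fintype n] [DecidableEq n] [RCLike 𝕜] {A B : Matrix n n 𝕜}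

theorem cfc_one_add_sq (hA : A.IsHermitian) : cfc (fun x : ℝ => 1 + x ^ 2) A = 1 + A * A := by
  have hA' : IsSelfAdjoint A := hA
  rw [cfc_const_add 1 (fun x : ℝ => x ^ 2) A, cfc_pow_id (R := ℝ) A 2, map_one, sq]

theorem isUnit_one_add_mul_self (hA : A.IsHermitian) : IsUnit (1 + A * A) := by
  have hA' : IsSelfAdjoint A := hA
  rw [← cfc_one_add_sq hA]
  exact (isUnit_cfc_iff (fun x : ℝ => 1 + x ^ 2) A).2 fun x _ => by positivity

theorem cfc_inv_one_add_sq (hA : A.IsHermitian) :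
    cfc (fun x : ℝ => (1 + x ^ 2)⁻¹) A = (1 + A * A)⁻¹ := by
  have hA' : IsSelfAdjoint A := hA
  rw [cfc_inv (fun x : ℝ => 1 + x ^ 2) A fun x _ => by positivity, cfc_one_add_sq hA,
    nonsing_inv_eq_ringInverse]

theorem commute_inv_one_add_mul_self (hA : A.IsHermitian) : Commute (1 + A * A)⁻¹ A := by
  have hA' : IsSelfAdjoint A := hA
  have h := cfc_commute_cfc (fun x : ℝ => (1 + x ^ 2)⁻¹) (fun x => x) A
  rwa [cfc_inv_one_add_sq hA, cfc_id' ℝ A] at h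

open scoped Matrix.Norms.Operator in
theorem hasDerivAt_trace_inv_one_add_mul_self (hA : A.IsHermitian) (B : Matrix n n 𝕜) :
    HasDerivAt (fun t : ℝ => trace ((1 + (A + t • B) * (A + t • B))⁻¹ * B))
      (-2 * trace ((1 + A * A)⁻¹ * A * B * (1 + A * A)⁻¹ * B)) 0 := by
  have hresolvent := (hasDerivAt_ringInverse_one_add_mul_self (𝕜 := ℝ) B
    (isUnit_one_add_mul_self hA)).mul_const B
  have htrace :=
    (traceLinearMap n ℝ 𝕜).toContinuousLinearMap.hasFDerivAt.comp_hasDerivAt 0 hresolvent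
  simp only [← nonsing_inv_eq_ringInverse] at htrace
  rw [neg_mul, ← trace_mul_anticommutator_mul (commute_inv_one_add_mul_self hA), ← trace_neg,
    ← Matrix.neg_mul]
  exact htrace

end Resolvent

section SpecialLagrangianAngle

variable {d : ℕ} {A B : Matrix (Fin d) (Fin d) ℝ}

theorem slAngle_eq_trace_cfc (hA : A.IsHermitian) : slAngle A = trace (cfc Real.arctan A) := by
  rw [slAngle, dif_pos hA, trace_cfc hA]
  rfl

theorem hasDerivAt_slAngle_add_smul (hA : A.IsHermitian) (hB : B.IsHermitian) (t : ℝ) :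
    HasDerivAt (fun s : ℝ => slAngle (A + s • B))
      (trace ((1 + (A + t • B) * (A + t • B))⁻¹ * B)) t := by
  have hline := isHermitian_add_real_smul hA hB
  simpa only [slAngle_eq_trace_cfc (hline _), cfc_inv_one_add_sq (hline _), re_to_real] using
    hasDerivAt_re_trace_cfc_add_smul Real.hasDerivAt_arctan' lipschitzWith_inv_one_add_sq hA hB t

theorem iteratedDeriv_two_slAngle_add_smul (hA : A.IsHermitian) (hB : B.IsHermitian) :
    iteratedDeriv 2 (fun t : ℝ => slAngle (A + t • B)) 0 =
      -2 * trace ((1 + A * A)⁻¹ * A * B * (1 + A * A)⁻¹ * B) := by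
  rw [iteratedDeriv_succ, iteratedDeriv_one,
    funext fun t => (hasDerivAt_slAngle_add_smul hA hB t).deriv,
    (hasDerivAt_trace_inv_one_add_mul_self hA B).deriv]

theorem strictConcaveOn_slAngle_posSemidef :
    StrictConcaveOn ℝ {A : Matrix (Fin d) (Fin d) ℝ | A.PosSemidef} slAngle := by
  have hconvex : Convex ℝ {A : Matrix (Fin d) (Fin d) ℝ | A.PosSemidef} :=
    fun A hA B hB s t hs ht _ => (PosSemidef.smul hA hs).add (PosSemidef.smul hB ht)
  refine (strictConcaveOn_re_trace_cfc strictConcaveOn_arctan_Ici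
    (fun x _ => (Real.hasDerivAt_arctan' x).hasDerivWithinAt) hconvex
    (fun A hA => PosSemidef.isHermitian hA) fun A hA => ?_).congr
    fun A hA => (slAngle_eq_trace_cfc (PosSemidef.isHermitian hA)).symm
  rw [(PosSemidef.isHermitian hA).spectrum_real_eq_range_eigenvalues]
  rintro _ ⟨i, rfl⟩
  exact PosSemidef.eigenvalues_nonneg hA i

end SpecialLagrangianAngle

theorem slAngle_second_deriv_and_strictConcave_general {d : ℕ} :
    (∀ A B : Matrix (Fin d) (Fin d) ℝ, A.IsSymm → B.IsSymm →
      iteratedDeriv 2 (fun t : ℝ => slAngle (A + t • B)) 0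
        = -2 * Matrix.trace ((1 + A * A)⁻¹ * A * B * (1 + A * A)⁻¹ * B)) ∧
    StrictConcaveOn ℝ {A : Matrix (Fin d) (Fin d) ℝ | A.PosSemidef} slAngle :=
  ⟨fun _ _ hA hB => iteratedDeriv_two_slAngle_add_smul (isHermitian_iff_isSymm.2 hA)
    (isHermitian_iff_isSymm.2 hB), strictConcaveOn_slAngle_posSemidef⟩

/-- D²Θ(A)(B,B) = −2 Tr((Id + A²)⁻¹ A B (Id + A²)⁻¹ B) for symmetric A, B; consequently Θ is
strictly concave on the open cone of positive definite symmetric matrices. -/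
theorem slAngle_second_deriv_and_strictConcave {d : ℕ} :
    (∀ A B : Matrix (Fin d) (Fin d) ℝ, A.IsSymm → B.IsSymm →
      iteratedDeriv 2 (fun t : ℝ => slAngle (A + t • B)) 0
        = -2 * Matrix.trace ((1 + A * A)⁻¹ * A * B * (1 + A * A)⁻¹ * B)) ∧
    StrictConcaveOn ℝ {A : Matrix (Fin d) (Fin d) ℝ | A.IsSymm ∧ A.PosDef} slAngle :=
  slAngle_second_deriv_and_strictConcave_general.imp_right fun hconcave =>
    hconcave.subset (fun _ hA => hA.2.posSemidef) convex_isSymm_posDef
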